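/- A finite ULD lattice L belongs to L(CFG), i.e. L is order-isomorphic to the configuration space of some chip firing game reaching a unique fixed point, if and only if for every meet-irreducible m of L the system E(m) has a non-negative integer solution. -/

import Mathlib

open Classical

section CFGdefs

variable {V : Type*}

/-- Out-degree of a vertex in a directed multigraph with edge multiplicities `E`. -/
noncomputable def outDeg (E : V → V → ℕ) (v : V) : ℕ := ∑ᶠ u, E v u

/-- A vertex is a sink if all its outgoing edges are loops. -/
def IsSink (E : V → V → ℕ) (v : V) : Prop := outDeg E v = E v v

/-- A vertex is firable in configuration `c`. -/
def Firable (E : V → V → ℕ) (c : V → ℕ) (v : V) : Prop :=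
  ¬ IsSink E v ∧ outDeg E v ≤ c v

/-- The result of firing vertex `v` in configuration `c`. -/
noncomputable def fire (E : V → V → ℕ) (c : V → ℕ) (v : V) : V → ℕ :=
  fun u => if u = v then c v - outDeg E v + E v v else c u + E v u

/-- The configuration obtained by firing a list of vertices in order. -/
noncomputable def fireList (E : V → V → ℕ) : (V → ℕ) → List V → (V → ℕ)
  | c, [] => c
  | c, v :: l => fireList E (fire E c v) l

/-- A list of vertices is a valid firing sequence from `c`. -/
def ValidSeq (E : V → V → ℕ) : (V → ℕ) → List V → Prop
  | _, [] => True
  | c, v :: l => Firable E c v ∧ ValidSeq E (fire E c v) l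

/-- `c'` is reachable from `c` by a finite sequence of firings. -/
def Reaches (E : V → V → ℕ) (c c' : V → ℕ) : Prop :=
  ∃ l : List V, ValidSeq E c l ∧ fireList E c l = c'

/-- A configuration with no firable vertex. -/
def FixedPt (E : V → V → ℕ) (c : V → ℕ) : Prop := ∀ v, ¬ Firable E c v

/-- The chip firing game `CFG(G,O)` reaches a unique fixed point. -/
def ReachesUFP (E : V → V → ℕ) (O : V → ℕ) : Prop :=
  ∃ fp : V → ℕ, Reaches E O fp ∧ FixedPt E fp ∧ ∀ c, Reaches E O c → Reaches E c fp

/-- The game is simple: in every firing sequence from `O` to the fixed point,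
each vertex fires at most once. -/
def SimpleCFG (E : V → V → ℕ) (O : V → ℕ) : Prop :=
  ∀ l : List V, ValidSeq E O l → FixedPt E (fireList E O l) → l.Nodup

/-- Single firing step from `c` to `c'` by firing vertex `v`. -/
def FireStep (E : V → V → ℕ) (c : V → ℕ) (v : V) (c' : V → ℕ) : Prop :=
  Firable E c v ∧ fire E c v = c'

/-- The partial order `L` is order-isomorphic to the configuration space of
`CFG(G,O)` ordered by reachability. -/
def Generates (E : V → V → ℕ) (O : V → ℕ) (L : Type*) [PartialOrder L] : Prop :=
  ∃ f : L ≃ {c : V → ℕ // Reaches E O c},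
    ∀ a b : L, a ≤ b ↔ Reaches E (f a).val (f b).val

/-- The support graph is connected (as an undirected graph). -/
def ConnectedG (E : V → V → ℕ) : Prop :=
  ∀ u v : V, Relation.ReflTransGen (fun a b => 0 < E a b ∨ 0 < E b a) u v

/-- The support graph together with its initial data is an Abelian Sandpile Model. -/
def IsASM (E : V → V → ℕ) : Prop :=
  ConnectedG E ∧ ∃ s : V, IsSink E s ∧ (∀ v, IsSink E v → v = s) ∧
    ∀ v₁ v₂ : V, v₁ ≠ v₂ → v₁ ≠ s → v₂ ≠ s → E v₁ v₂ = E v₂ v₁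

/-- The directed multigraph has no directed cycle. -/
def AcyclicG (E : V → V → ℕ) : Prop :=
  ∀ v : V, ¬ Relation.TransGen (fun a b => 0 < E a b) v v

end CFGdefs

/-- `L` is generated by some chip firing game reaching a unique fixed point. -/
def MemLCFG (L : Type*) [PartialOrder L] : Prop :=
  ∃ (V : Type) (_ : Finite V) (E : V → V → ℕ) (O : V → ℕ),
    ReachesUFP E O ∧ Generates E O L

/-- `L` is generated by some Abelian Sandpile Model reaching a unique fixed point. -/
def MemLASM (L : Type*) [PartialOrder L] : Prop :=
  ∃ (V : Type) (_ : Finite V) (E : V → V → ℕ) (O : V → ℕ),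
    IsASM E ∧ ReachesUFP E O ∧ Generates E O L

section Latticedefs

variable {L : Type*} [Lattice L]

/-- `m` is meet-irreducible: it has exactly one upper cover. -/
def MeetIrred (m : L) : Prop := ∃! y, m ⋖ y

/-- `j` is join-irreducible: it has exactly one lower cover. -/
def JoinIrred (j : L) : Prop := ∃! y, y ⋖ j

/-- The set `M_x \ M_y` of meet-irreducibles above `x` but not above `y`. -/
def MsetDiff (x y : L) : Set L := {m | MeetIrred m ∧ x ≤ m ∧ ¬ y ≤ m}

/-- The set `M \ M_a` of meet-irreducibles not above `a`. -/
def MnotAbove (a : L) : Set L := {m | MeetIrred m ∧ ¬ a ≤ m}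

/-- `x⁺`: the join of all upper covers of `x`. -/
noncomputable def uplus [Fintype L] [OrderBot L] (x : L) : L :=
  Finset.univ.sup (fun y => if x ⋖ y then y else ⊥)

/-- `L` is upper locally distributive: for every `x ≠ ⊤` the interval `[x, x⁺]`
is isomorphic to a Boolean lattice (a hypercube). -/
def IsULD (L : Type*) [Lattice L] [Fintype L] [BoundedOrder L] : Prop :=
  ∀ x : L, x ≠ ⊤ → ∃ n : ℕ, Nonempty (↥(Set.Icc x (uplus x)) ≃o Set (Fin n))

/-- `𝔘_m`: the minimal elements of `{x : ∃ y, x ⋖ y and 𝔪(x,y) = m}`. -/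
def Uset (m : L) : Set L :=
  {x | Minimal (fun z => ∃ y, z ⋖ y ∧ MsetDiff z y = {m}) x}

/-- `𝔏_m`: the maximal elements of `{x : a ≰ x for every a ∈ 𝔘_m}`. -/
def Lset (m : L) : Set L :=
  {x | Maximal (fun z => ∀ a ∈ Uset m, ¬ a ≤ z) x}

/-- `(w, e)` is a (non-negative integer) solution of the system `E(m)`. -/
def SolvesE [OrderBot L] (m : L) (w : ℕ) (e : L → ℕ) : Prop :=
  (Uset m = {(⊥ : L)} → 1 ≤ w) ∧
  (Uset m ≠ {(⊥ : L)} →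
    (∀ a ∈ Lset m, (∑ᶠ x ∈ MnotAbove a, e x) < w) ∧
    (∀ a ∈ Uset m, w ≤ ∑ᶠ x ∈ MnotAbove a, e x))

/-- The system `E(m)` has a non-negative integer solution. -/
def HasSolE [OrderBot L] (m : L) : Prop := ∃ w e, SolvesE m w e

/-- The variable `e_{x,m}` occurs in the system `𝔈(m)`. -/
def VarOccurs [OrderBot L] (x m : L) : Prop :=
  MeetIrred m ∧ Uset m ≠ {(⊥ : L)} ∧ ∃ a ∈ Uset m ∪ Lset m, x ∈ MnotAbove a

/-- `(W, Ee)` is a non-negative integer solution of the system `Ω`. -/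
def SolvesOmega [OrderBot L] (W : L → ℕ) (Ee : L → L → ℕ) : Prop :=
  (∀ m : L, MeetIrred m → SolvesE m (W m) (fun x => Ee x m)) ∧
  (∀ m₁ m₂ : L, m₁ ≠ m₂ → VarOccurs m₁ m₂ → VarOccurs m₂ m₁ → Ee m₁ m₂ = Ee m₂ m₁)

/-- The edge relation of the directed graph `𝒢` on the meet-irreducibles. -/
def Gedge (m₁ m₂ : L) : Prop :=
  MeetIrred m₁ ∧ MeetIrred m₂ ∧ ∃ a ∈ Uset m₂, m₁ ∈ MnotAbove a

end Latticedefs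

/-- The system `Ω` has a non-negative integer solution. -/
def HasSolOmega (L : Type*) [Lattice L] [OrderBot L] : Prop :=
  ∃ W Ee, SolvesOmega (L := L) W Ee

/-- The directed graph `𝒢` on the meet-irreducibles is acyclic. -/
def GAcyclic (L : Type*) [Lattice L] : Prop :=
  ∀ m : L, ¬ Relation.TransGen (Gedge (L := L)) m m

section LatticeLemmas

variable {L : Type*} [Lattice L]

lemma MeetIrred.covBy_le_of_lt {m y z : L} [Finite L] (hm : MeetIrred m) (hy : m ⋖ y)
    (hz : m < z) : y ≤ z := by
  obtain ⟨t, ht, htz⟩ := exists_covBy_le_of_lt hz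
  rwa [hm.unique hy ht]

/-- Meet-irreducibles separate the elements of a finite lattice. -/
lemma exists_meetIrred_of_not_le [Finite L] {x y : L} (h : ¬ y ≤ x) :
    ∃ m, MeetIrred m ∧ x ≤ m ∧ ¬ y ≤ m := by
  obtain ⟨m, hxm, hm⟩ := Finite.exists_le_maximal (p := fun z : L => ¬ y ≤ z) h
  have key : ∀ z, m < z → m ⊔ y ≤ z := fun z hz =>
    sup_le hz.le (by_contra fun hy => hm.not_gt hy hz)
  have hlt : m < m ⊔ y := left_lt_sup.2 hm.prop
  refine ⟨m, ⟨m ⊔ y, ⟨hlt, fun z hz hz' => (key z hz).not_gt hz'⟩, fun z hz => ?_⟩, hxm, hm.prop⟩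
  exact (hz.eq_or_eq hlt.le (key z hz.lt)).resolve_left hlt.ne' |>.symm

lemma le_iff_MnotAbove_subset [Finite L] {a b : L} :
    a ≤ b ↔ MnotAbove a ⊆ MnotAbove b := by
  refine ⟨fun h m hm => ⟨hm.1, fun hb => hm.2 (h.trans hb)⟩, fun h => ?_⟩
  by_contra hab
  obtain ⟨m, hm, hbm, ham⟩ := exists_meetIrred_of_not_le hab
  exact (h ⟨hm, ham⟩).2 hbm

lemma MnotAbove_sup (a b : L) : MnotAbove (a ⊔ b) = MnotAbove a ∪ MnotAbove b := by
  ext m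
  simp only [MnotAbove, sup_le_iff, Set.mem_union, Set.mem_ofPred_eq]
  tauto

lemma MnotAbove_eq_insert_iff {a b m : L} (hab : a ≤ b) :
    MsetDiff a b = {m} ↔ MeetIrred m ∧ a ≤ m ∧ MnotAbove b = insert m (MnotAbove a) := by
  constructor
  · intro h
    have hm : m ∈ MsetDiff a b := h ▸ rfl
    refine ⟨hm.1, hm.2.1, ?_⟩
    ext x
    have hx : x ∈ MsetDiff a b ↔ x = m := by rw [h]; rfl
    simp only [MsetDiff, MnotAbove, Set.mem_ofPred_eq, Set.mem_insert_iff] at hx ⊢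
    have : b ≤ x → a ≤ x := hab.trans
    tauto
  · rintro ⟨hm, ham, h⟩
    ext x
    have hx : x ∈ MnotAbove b ↔ x = m ∨ x ∈ MnotAbove a := by rw [h]; rfl
    simp only [MsetDiff, MnotAbove, Set.mem_ofPred_eq, Set.mem_singleton_iff] at hx ⊢
    constructor
    · tauto
    · rintro rfl
      tauto

/-- Two elements whose sets of meet-irreducibles differ by one element form a cover. -/
lemma covBy_of_MnotAbove_eq_insert [Finite L] {a b m : L} (ham : a ≤ m)
    (h : MnotAbove b = insert m (MnotAbove a)) : a ⋖ b := by
  have hm : m ∉ MnotAbove a := fun hm => hm.2 ham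
  refine ⟨lt_of_le_of_ne (le_iff_MnotAbove_subset.2 (h ▸ Set.subset_insert _ _)) ?_, ?_⟩
  · rintro rfl
    exact hm (h ▸ Set.mem_insert _ _)
  · intro c hac hcb
    have h1 := le_iff_MnotAbove_subset.1 hac.le
    have h2 := le_iff_MnotAbove_subset.1 hcb.le
    by_cases hmc : m ∈ MnotAbove c
    · exact hcb.not_ge (le_iff_MnotAbove_subset.2 (h ▸ Set.insert_subset hmc h1))
    · refine hac.not_ge (le_iff_MnotAbove_subset.2 fun x hx => ?_)
      have := h2 hx
      rw [h] at this
      exact this.resolve_left fun hxm => hmc (hxm ▸ hx)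

/-- Above an element where `m` can be crossed, `m` can be crossed until it has been. -/
lemma exists_MnotAbove_eq_insert {m z y a : L} (hzy : z ⋖ y) (h : MsetDiff z y = {m})
    (hza : z ≤ a) : ∃ b, MnotAbove b = insert m (MnotAbove a) := by
  obtain ⟨-, -, hy⟩ := (MnotAbove_eq_insert_iff hzy.le).1 h
  refine ⟨a ⊔ y, ?_⟩
  rw [MnotAbove_sup, hy]
  have : MnotAbove z ⊆ MnotAbove a := fun x hx => ⟨hx.1, fun h' => hx.2 (hza.trans h')⟩
  rw [Set.union_insert, Set.union_eq_left.2 this]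

lemma exists_covBy_of_mem_Uset {m u : L} (hu : u ∈ Uset m) :
    ∃ y, u ⋖ y ∧ MsetDiff u y = {m} :=
  Minimal.prop (P := fun z => ∃ y, z ⋖ y ∧ MsetDiff z y = {m}) hu

lemma not_le_of_mem_Lset {m l u : L} (hl : l ∈ Lset m) (hu : u ∈ Uset m) : ¬ u ≤ l :=
  Maximal.prop (P := fun z => ∀ a ∈ Uset m, ¬ a ≤ z) hl u hu

lemma exists_mem_Uset_le [Finite L] {m z y : L} (hzy : z ⋖ y) (h : MsetDiff z y = {m}) :
    ∃ u ∈ Uset m, u ≤ z := by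
  obtain ⟨u, hu, hmin⟩ :=
    Finite.exists_le_minimal (p := fun z : L => ∃ y, z ⋖ y ∧ MsetDiff z y = {m}) ⟨y, hzy, h⟩
  exact ⟨u, hmin, hu⟩

lemma exists_mem_Lset_le [Finite L] {m z : L} (h : ∀ a ∈ Uset m, ¬ a ≤ z) :
    ∃ l ∈ Lset m, z ≤ l := by
  obtain ⟨l, hl, hmax⟩ := Finite.exists_le_maximal (p := fun z : L => ∀ a ∈ Uset m, ¬ a ≤ z) h
  exact ⟨l, hmax, hl⟩

lemma CovBy.inf_eq_of_ne {x y a : L} (hy : x ⋖ y) (ha : x ⋖ a) (hne : y ≠ a) : y ⊓ a = x := by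
  refine (hy.eq_or_eq (le_inf hy.le ha.le) inf_le_left).resolve_right fun h => ?_
  exact hne ((ha.eq_or_eq hy.le (inf_eq_left.1 h)).resolve_left hy.lt.ne')

lemma MnotAbove_bot [OrderBot L] : MnotAbove (⊥ : L) = ∅ := by
  simp [MnotAbove]

variable [Fintype L] [BoundedOrder L]

lemma le_uplus {x y : L} (h : x ⋖ y) : y ≤ uplus x := by
  have := Finset.le_sup (f := fun y => if x ⋖ y then y else ⊥) (Finset.mem_univ y)
  simpa [uplus, h] using this

lemma IsULD.inf_sup_left (hL : IsULD L) {x p q r : L} (hx : x ≠ ⊤) (hp : p ∈ Set.Icc x (uplus x))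
    (hq : q ∈ Set.Icc x (uplus x)) (hr : r ∈ Set.Icc x (uplus x)) :
    p ⊓ (q ⊔ r) = (p ⊓ q) ⊔ (p ⊓ r) := by
  obtain ⟨n, ⟨φ⟩⟩ := hL x hx
  have : (⟨p, hp⟩ : Set.Icc x (uplus x)) ⊓ (⟨q, hq⟩ ⊔ ⟨r, hr⟩) =
      (⟨p, hp⟩ ⊓ ⟨q, hq⟩) ⊔ (⟨p, hp⟩ ⊓ ⟨r, hr⟩) := by
    apply φ.injective
    simp only [map_inf, map_sup]
    exact _root_.inf_sup_left _ _ _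
  exact congrArg Subtype.val this

lemma IsULD.covBy_sup (hL : IsULD L) {x y a : L} (hy : x ⋖ y) (ha : x ⋖ a) (hne : y ≠ a) :
    a ⋖ a ⊔ y := by
  have hya : y ⊓ a = x := hy.inf_eq_of_ne ha hne
  refine ⟨left_lt_sup.2 fun h => hy.lt.ne' (by rwa [inf_eq_left.2 h] at hya), fun c hac hc => ?_⟩
  have hd := hL.inf_sup_left (p := c) (q := a) (r := y) hy.lt.ne_top
    ⟨ha.le.trans hac.le, hc.le.trans (sup_le (le_uplus ha) (le_uplus hy))⟩
    ⟨ha.le, le_uplus ha⟩ ⟨hy.le, le_uplus hy⟩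
  rw [inf_eq_left.2 hc.le, inf_eq_right.2 hac.le] at hd
  rcases hy.eq_or_eq (le_inf (ha.le.trans hac.le) hy.le) (inf_le_right (a := c)) with h | h
  · rw [h, sup_eq_left.2 ha.le] at hd
    exact hac.ne' hd
  · rw [h] at hd
    exact hc.ne hd

lemma IsULD.not_le_sup (hL : IsULD L) {x y a b : L} (hy : x ⋖ y) (ha : x ⋖ a) (hb : x ⋖ b)
    (hya : y ≠ a) (hyb : y ≠ b) : ¬ y ≤ a ⊔ b := by
  intro h
  have hd := hL.inf_sup_left (p := y) (q := a) (r := b) hy.lt.ne_top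
    ⟨hy.le, le_uplus hy⟩ ⟨ha.le, le_uplus ha⟩ ⟨hb.le, le_uplus hb⟩
  rw [inf_eq_left.2 h, hy.inf_eq_of_ne ha hya, hy.inf_eq_of_ne hb hyb, sup_idem] at hd
  exact hy.lt.ne' hd

lemma IsULD.eq_of_mem_MsetDiff (hL : IsULD L) (x : L) :
    ∀ {y m m' : L}, x ⋖ y → m ∈ MsetDiff x y → m' ∈ MsetDiff x y → m = m' := by
  induction x using WellFoundedGT.induction with
  | ind x ih =>
    intro y m m' hy hm hm'
    rcases hm.2.1.eq_or_lt with rfl | hlt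
    · rcases hm'.2.1.eq_or_lt with h | hlt'
      · exact h
      · exact absurd (hm.1.covBy_le_of_lt hy hlt') hm'.2.2
    rcases hm'.2.1.eq_or_lt with rfl | hlt'
    · exact absurd (hm'.1.covBy_le_of_lt hy hlt) hm.2.2
    obtain ⟨a, ha, ham⟩ := exists_covBy_le_of_lt hlt
    obtain ⟨b, hb, hbm⟩ := exists_covBy_le_of_lt hlt'
    have hya : y ≠ a := by rintro rfl; exact hm.2.2 ham
    have hyb : y ≠ b := by rintro rfl; exact hm'.2.2 hbm
    obtain ⟨n, hn, hab, hyn⟩ := exists_meetIrred_of_not_le (hL.not_le_sup hy ha hb hya hyb)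
    have aux : ∀ {c k : L}, x ⋖ c → y ≠ c → c ≤ k → c ≤ n → MeetIrred k → ¬ y ≤ k → k = n :=
      fun {c k} hc hyc hck hcn hk hyk => ih c hc.lt (hL.covBy_sup hy hc hyc)
        ⟨hk, hck, fun h => hyk (le_sup_right.trans h)⟩
        ⟨hn, hcn, fun h => hyn (le_sup_right.trans h)⟩
    rw [aux ha hya ham (le_sup_left.trans hab) hm.1 hm.2.2,
      aux hb hyb hbm (le_sup_right.trans hab) hm'.1 hm'.2.2]

/-- In a ULD lattice every cover crosses exactly one meet-irreducible. -/
lemma IsULD.exists_MsetDiff_eq (hL : IsULD L) {x y : L} (h : x ⋖ y) :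
    ∃ m, MsetDiff x y = {m} := by
  obtain ⟨m, hm⟩ := exists_meetIrred_of_not_le h.lt.not_ge
  exact ⟨m, Set.eq_singleton_iff_unique_mem.2 ⟨hm, fun k hk => hL.eq_of_mem_MsetDiff x h hk hm⟩⟩

/-- An element not below `m` lies above an element of `𝔘_m`. -/
lemma IsULD.exists_mem_Uset_le_of_not_le (hL : IsULD L) {m : L} (hm : MeetIrred m) (a : L) :
    ¬ a ≤ m → ∃ u ∈ Uset m, u ≤ a := by
  induction a using WellFoundedLT.induction with
  | ind a ih =>
    intro ha
    have hbot : a ≠ ⊥ := by rintro rfl; exact ha bot_le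
    obtain ⟨b, -, hb⟩ := exists_le_covBy_of_lt (bot_lt_iff_ne_bot.2 hbot)
    by_cases hbm : b ≤ m
    · obtain ⟨k, hk⟩ := hL.exists_MsetDiff_eq hb
      have : m ∈ MsetDiff b a := ⟨hm, hbm, ha⟩
      rw [hk] at this
      obtain rfl : m = k := this
      obtain ⟨u, hu, hub⟩ := exists_mem_Uset_le hb hk
      exact ⟨u, hu, hub.trans hb.le⟩
    · obtain ⟨u, hu, hub⟩ := ih b hb.lt hbm
      exact ⟨u, hu, hub.trans hb.le⟩

end LatticeLemmas

section GameLemmas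

variable {V : Type*} {E : V → V → ℕ}

lemma fireList_append (c : V → ℕ) (l l' : List V) :
    fireList E c (l ++ l') = fireList E (fireList E c l) l' := by
  induction l generalizing c with
  | nil => rfl
  | cons v l ih => exact ih _

lemma validSeq_append {c : V → ℕ} {l l' : List V} :
    ValidSeq E c (l ++ l') ↔ ValidSeq E c l ∧ ValidSeq E (fireList E c l) l' := by
  induction l generalizing c with
  | nil => simp [ValidSeq, fireList]
  | cons v l ih => simp [ValidSeq, fireList, ih, and_assoc]

lemma Firable.fire_of_ne {c : V → ℕ} {u v : V} (h : Firable E c v) (huv : v ≠ u) :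
    Firable E (fire E c u) v := by
  refine ⟨h.1, ?_⟩
  simp only [fire, if_neg huv]
  exact h.2.trans (Nat.le_add_right _ _)

lemma fire_comm {c : V → ℕ} {u v : V} (hu : Firable E c u) (hv : Firable E c v) (huv : u ≠ v) :
    fire E (fire E c u) v = fire E (fire E c v) u := by
  funext x
  have := hu.2
  have := hv.2
  rcases eq_or_ne x u with rfl | hxu
  · simp only [fire, if_neg huv, if_neg huv.symm, if_true]
    omega
  · rcases eq_or_ne x v with rfl | hxv
    · simp only [fire, if_neg huv, if_neg huv.symm, if_true]
      omega
    · simp only [fire, if_neg hxu, if_neg hxv]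
      omega

lemma Firable.fireList_of_notMem {c : V → ℕ} {v : V} {l : List V} (h : Firable E c v)
    (hl : v ∉ l) : Firable E (fireList E c l) v := by
  induction l generalizing c with
  | nil => exact h
  | cons u l ih =>
    rw [List.mem_cons, not_or] at hl
    exact ih (h.fire_of_ne hl.1) hl.2

/-- A firable vertex that occurs in a firing sequence may be fired first. -/
lemma ValidSeq.exists_perm_cons {c : V → ℕ} {v : V} {l : List V} (hl : ValidSeq E c l)
    (hv : Firable E c v) (hvl : v ∈ l) :
    ∃ t, ValidSeq E (fire E c v) t ∧ fireList E (fire E c v) t = fireList E c l ∧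
      l.Perm (v :: t) := by
  induction l generalizing c with
  | nil => simp at hvl
  | cons u l ih =>
    rcases eq_or_ne v u with rfl | hne
    · exact ⟨l, hl.2, rfl, List.Perm.refl _⟩
    · obtain ⟨t, ht, hft, hp⟩ := ih hl.2 (hv.fire_of_ne hne) (List.mem_of_ne_of_mem hne hvl)
      rw [fire_comm hl.1 hv hne.symm] at ht hft
      exact ⟨u :: t, ⟨hl.1.fire_of_ne hne.symm, ht⟩, hft,
        (hp.cons u).trans (List.Perm.swap v u t)⟩

/-- Every firing sequence extends to a rearrangement of a given sequence to a fixed point. -/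
lemma ValidSeq.exists_perm_append {c : V → ℕ} {l l' : List V} (hl : ValidSeq E c l)
    (hfix : FixedPt E (fireList E c l)) (hl' : ValidSeq E c l') :
    ∃ t, ValidSeq E (fireList E c l') t ∧ l.Perm (l' ++ t) := by
  induction l' generalizing c l with
  | nil => exact ⟨l, hl, List.Perm.refl _⟩
  | cons v l' ih =>
    have hvl : v ∈ l := by_contra fun h => hfix v (hl'.1.fireList_of_notMem h)
    obtain ⟨t, ht, hft, hp⟩ := hl.exists_perm_cons hl'.1 hvl
    obtain ⟨s, hs, hps⟩ := ih ht (hft ▸ hfix) hl'.2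
    exact ⟨s, hs, hp.trans (hps.cons v)⟩

/-- If a fixed point is reachable, then the shot multiset between two configurations is
determined by its endpoints. -/
lemma ValidSeq.perm {c d : V → ℕ} {l l' r : List V} (hl : ValidSeq E c l)
    (hl' : ValidSeq E c l') (hd : fireList E c l = d) (hd' : fireList E c l' = d)
    (hr : ValidSeq E d r) (hfix : FixedPt E (fireList E d r)) : l.Perm l' := by
  obtain ⟨t, ht, hp⟩ := ValidSeq.exists_perm_append (l := l ++ r) (l' := l' ++ r)
    (validSeq_append.2 ⟨hl, hd ▸ hr⟩) (by rwa [fireList_append, hd])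
    (validSeq_append.2 ⟨hl', hd' ▸ hr⟩)
  rw [fireList_append, hd'] at ht
  cases t with
  | nil => rw [List.append_nil] at hp; exact (List.perm_append_right_iff r).1 hp
  | cons v t => exact absurd ht.1 (hfix v)

/-- Chip balance at a vertex along a firing sequence, with the incoming weight at `v` from
`v` itself replaced by an arbitrary `T`. -/
lemma ValidSeq.chip_balance {c : V → ℕ} {l : List V} (hl : ValidSeq E c l) (v : V) (T : ℕ) :
    (fireList E c l v : ℤ) + l.count v * (T + outDeg E v - E v v) =
      c v + ((l.map fun u => if u = v then T else E u v).sum : ℕ) := by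
  induction l generalizing c with
  | nil => simp [fireList]
  | cons u l ih =>
    have h1 := ih hl.2
    have h2 := hl.1.2
    simp only [fireList, List.map_cons, List.sum_cons]
    rcases eq_or_ne u v with rfl | hne
    · have h3 : (fire E c u u : ℤ) = c u - outDeg E u + E u u := by
        simp only [fire, if_true]
        omega
      simp only [List.count_cons_self, if_true, Nat.cast_add, Nat.cast_one]
      linarith
    · have h3 : (fire E c u v : ℤ) = c v + E u v := by
        simp [fire, hne.symm]
      simp only [List.count_cons_of_ne hne, if_neg hne, Nat.cast_add]
      linarith

lemma le_outDeg [Finite V] (v u : V) : E v u ≤ outDeg E v :=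
  single_le_finsum u (Set.toFinite _) fun _ => Nat.zero_le _

end GameLemmas

section Necessity

variable {V : Type*} {E : V → V → ℕ} {O : V → ℕ} {L : Type*}

/-- A firing sequence from the initial configuration to the configuration of `a`. -/
noncomputable def shots (f : L ≃ {c : V → ℕ // Reaches E O c}) (a : L) : List V :=
  (f a).2.choose

lemma validSeq_shots (f : L ≃ {c : V → ℕ // Reaches E O c}) (a : L) :
    ValidSeq E O (shots f a) :=
  (f a).2.choose_spec.1

lemma fireList_shots (f : L ≃ {c : V → ℕ // Reaches E O c}) (a : L) :
    fireList E O (shots f a) = (f a).1 :=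
  (f a).2.choose_spec.2

lemma perm_shots (hU : ReachesUFP E O) (f : L ≃ {c : V → ℕ // Reaches E O c}) {a : L}
    {l : List V} (hl : ValidSeq E O l) (h : fireList E O l = (f a).1) :
    (shots f a).Perm l := by
  obtain ⟨fp, -, hfix, hall⟩ := hU
  obtain ⟨r, hr, hrf⟩ := hall _ (f a).2
  exact (validSeq_shots f a).perm hl (fireList_shots f a) h hr (hrf ▸ hfix)

lemma shots_perm_append (hU : ReachesUFP E O) (f : L ≃ {c : V → ℕ // Reaches E O c}) {a b : L}
    {p : List V} (hp : ValidSeq E (f a).1 p) (h : fireList E (f a).1 p = (f b).1) :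
    (shots f b).Perm (shots f a ++ p) :=
  perm_shots hU f (validSeq_append.2 ⟨validSeq_shots f a, by rwa [fireList_shots]⟩)
    (by rw [fireList_append, fireList_shots, h])

variable [Lattice L]

lemma exists_shots_perm_of_le (hU : ReachesUFP E O) (f : L ≃ {c : V → ℕ // Reaches E O c})
    (hf : ∀ a b : L, a ≤ b ↔ Reaches E (f a).val (f b).val) {a b : L} (hab : a ≤ b) :
    ∃ p, ValidSeq E (f a).1 p ∧ fireList E (f a).1 p = (f b).1 ∧
      (shots f b).Perm (shots f a ++ p) := by
  obtain ⟨p, hp, h⟩ := (hf a b).1 hab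
  exact ⟨p, hp, h, shots_perm_append hU f hp h⟩

lemma count_shots_mono (hU : ReachesUFP E O) (f : L ≃ {c : V → ℕ // Reaches E O c})
    (hf : ∀ a b : L, a ≤ b ↔ Reaches E (f a).val (f b).val) (v : V) {a b : L} (hab : a ≤ b) :
    (shots f a).count v ≤ (shots f b).count v := by
  obtain ⟨p, -, -, h⟩ := exists_shots_perm_of_le hU f hf hab
  rw [h.count_eq, List.count_append]
  exact Nat.le_add_right _ _

lemma length_shots_strictMono (hU : ReachesUFP E O) (f : L ≃ {c : V → ℕ // Reaches E O c})
    (hf : ∀ a b : L, a ≤ b ↔ Reaches E (f a).val (f b).val) {a b : L} (hab : a < b) :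
    (shots f a).length < (shots f b).length := by
  obtain ⟨p, -, hpb, h⟩ := exists_shots_perm_of_le hU f hf hab.le
  rw [h.length_eq, List.length_append]
  cases p with
  | nil => exact absurd (f.injective (Subtype.ext hpb)) hab.ne
  | cons v p => simp

/-- Firing a vertex moves to an upper cover. -/
lemma Firable.exists_covBy (hU : ReachesUFP E O) (f : L ≃ {c : V → ℕ // Reaches E O c})
    (hf : ∀ a b : L, a ≤ b ↔ Reaches E (f a).val (f b).val) {a : L} {v : V}
    (hv : Firable E (f a).1 v) :
    ∃ b, a ⋖ b ∧ (f b).1 = fire E (f a).1 v ∧ (shots f b).Perm (shots f a ++ [v]) := by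
  have hr : Reaches E O (fire E (f a).1 v) :=
    ⟨shots f a ++ [v], validSeq_append.2 ⟨validSeq_shots f a, by
      rw [fireList_shots]; exact ⟨hv, trivial⟩⟩, by rw [fireList_append, fireList_shots]; rfl⟩
  obtain ⟨b, hb⟩ := f.surjective ⟨_, hr⟩
  have hb' : (f b).1 = fire E (f a).1 v := by rw [hb]
  have hp : (shots f b).Perm (shots f a ++ [v]) :=
    shots_perm_append hU f (p := [v]) ⟨hv, trivial⟩ hb'.symm
  have hlen : (shots f b).length = (shots f a).length + 1 := by
    rw [hp.length_eq, List.length_append]; rfl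
  have hle : a ≤ b := (hf a b).2 ⟨[v], ⟨hv, trivial⟩, hb'.symm⟩
  refine ⟨b, ⟨lt_of_le_of_ne hle ?_, fun c hac hcb => ?_⟩, hb', hp⟩
  · rintro rfl
    omega
  · have := length_shots_strictMono hU f hf hac
    have := length_shots_strictMono hU f hf hcb
    omega

/-- Every cover is realized by firing a single vertex. -/
lemma CovBy.exists_firable (hU : ReachesUFP E O) (f : L ≃ {c : V → ℕ // Reaches E O c})
    (hf : ∀ a b : L, a ≤ b ↔ Reaches E (f a).val (f b).val) {a b : L} (hab : a ⋖ b) :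
    ∃ v, Firable E (f a).1 v ∧ (f b).1 = fire E (f a).1 v ∧
      (shots f b).Perm (shots f a ++ [v]) := by
  obtain ⟨p, hp, h, -⟩ := exists_shots_perm_of_le hU f hf hab.le
  cases p with
  | nil => exact absurd (f.injective (Subtype.ext h)) hab.lt.ne
  | cons v p =>
    obtain ⟨c, hac, hc, hpc⟩ := hp.1.exists_covBy hU f hf
    have hcb : c ≤ b := (hf c b).2 ⟨p, by rw [hc]; exact hp.2, by rw [hc]; exact h⟩
    obtain rfl := (hab.eq_or_eq hac.le hcb).resolve_left hac.lt.ne'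
    exact ⟨v, hp.1, hc, hpc⟩

/-- A vertex fired in a cover crossing `m` is still firable at `m`, and is not fired between. -/
lemma firable_of_mem_MsetDiff (hU : ReachesUFP E O) (f : L ≃ {c : V → ℕ // Reaches E O c})
    (hf : ∀ a b : L, a ≤ b ↔ Reaches E (f a).val (f b).val) {x y m : L} {v : V}
    (hv : Firable E (f x).1 v) (hy : (f y).1 = fire E (f x).1 v) (hm : m ∈ MsetDiff x y) :
    Firable E (f m).1 v ∧ (shots f x).count v = (shots f m).count v := by
  obtain ⟨p, hp, hpm, hperm⟩ := exists_shots_perm_of_le hU f hf hm.2.1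
  have hvp : v ∉ p := by
    intro hvp
    obtain ⟨t, ht, hft, -⟩ := hp.exists_perm_cons hv hvp
    rw [← hy] at ht hft
    exact hm.2.2 ((hf y m).2 ⟨t, ht, hft.trans hpm⟩)
  refine ⟨hpm ▸ hv.fireList_of_notMem hvp, ?_⟩
  rw [hperm.count_eq, List.count_append, List.count_eq_zero_of_not_mem hvp, add_zero]

/-- Exactly one vertex is firable at a meet-irreducible. -/
lemma MeetIrred.existsUnique_firable (hU : ReachesUFP E O)
    (f : L ≃ {c : V → ℕ // Reaches E O c})
    (hf : ∀ a b : L, a ≤ b ↔ Reaches E (f a).val (f b).val) {m : L} (hm : MeetIrred m) :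
    ∃! v, Firable E (f m).1 v := by
  obtain ⟨y, hy, hmy⟩ := hm
  obtain ⟨v, hv, -, hpv⟩ := CovBy.exists_firable hU f hf hy
  refine ⟨v, hv, fun u hu => ?_⟩
  obtain ⟨z, hz, -, hpu⟩ := Firable.exists_covBy hU f hf hu
  obtain rfl := hmy z hz
  have := (List.perm_append_left_iff _).1 (hpu.symm.trans hpv)
  simpa using this

variable [Fintype L] [BoundedOrder L]

/-- Summing over a shot sequence amounts to summing over the meet-irreducibles crossed. -/
lemma IsULD.finsum_MnotAbove_eq (hL : IsULD L) (hU : ReachesUFP E O)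
    (f : L ≃ {c : V → ℕ // Reaches E O c})
    (hf : ∀ a b : L, a ≤ b ↔ Reaches E (f a).val (f b).val) (ν : L → V)
    (hν : ∀ m, MeetIrred m → Firable E (f m).1 (ν m)) (g : V → ℕ) (a : L) :
    ∑ᶠ x ∈ MnotAbove a, g (ν x) = ((shots f a).map g).sum := by
  induction a using WellFoundedLT.induction with
  | ind a ih =>
    rcases eq_or_ne a ⊥ with rfl | ha
    · obtain ⟨z, hz⟩ := f.surjective ⟨O, [], trivial, rfl⟩
      have hzb : z = ⊥ := le_bot_iff.1 ((hf _ _).2 (by rw [hz]; exact (f ⊥).2))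
      have : (shots f ⊥).Perm [] := perm_shots hU f (l := []) trivial (by rw [← hzb, hz]; rfl)
      simp [MnotAbove_bot, this.eq_nil]
    · obtain ⟨b, -, hb⟩ := exists_le_covBy_of_lt (bot_lt_iff_ne_bot.2 ha)
      obtain ⟨m, hm⟩ := hL.exists_MsetDiff_eq hb
      obtain ⟨hmi, hbm, hins⟩ := (MnotAbove_eq_insert_iff hb.le).1 hm
      obtain ⟨v, hv, hav, hp⟩ := CovBy.exists_firable hU f hf hb
      have hvm := (firable_of_mem_MsetDiff hU f hf hv hav (m := m) (hm ▸ rfl)).1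
      obtain rfl := (hmi.existsUnique_firable hU f hf).unique hvm (hν m hmi)
      rw [hins, finsum_mem_insert _ (fun h => h.2 hbm) (Set.toFinite _), ih b hb.lt,
        (hp.map g).sum_eq]
      simp [add_comm]

lemma IsULD.hasSolE_of_memLCFG (hL : IsULD L) (h : MemLCFG L) {m : L} (hm : MeetIrred m) :
    HasSolE m := by
  obtain ⟨V, _, E, O, hU, f, hf⟩ := h
  have hex : ∀ x : L, ∃ v, MeetIrred x → Firable E (f x).1 v := fun x => by
    by_cases hx : MeetIrred x
    · obtain ⟨v, hv, -⟩ := hx.existsUnique_firable hU f hf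
      exact ⟨v, fun _ => hv⟩
    · obtain ⟨v, -⟩ := hm.existsUnique_firable hU f hf
      exact ⟨v, fun h => absurd h hx⟩
  choose ν hν using hex
  set v := ν m with hv
  set k := (shots f m).count v
  obtain ⟨T, hT⟩ : ∃ T, ∀ a, (f a).1 v < T :=
    ⟨∑ a, (f a).1 v + 1, fun a => Nat.lt_succ_of_le
      (Finset.single_le_sum (f := fun a => (f a).1 v) (fun _ _ => Nat.zero_le _)
        (Finset.mem_univ a))⟩
  have hloop : (E v v : ℤ) ≤ outDeg E v := by exact_mod_cast le_outDeg v v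
  have hbal : ∀ a : L, ((f a).1 v : ℤ) + (shots f a).count v * (T + outDeg E v - E v v) =
      O v + ((∑ᶠ x ∈ MnotAbove a, if ν x = v then T else E (ν x) v : ℕ) : ℤ) := fun a => by
    rw [hL.finsum_MnotAbove_eq hU f hf ν hν (fun u => if u = v then T else E u v),
      ← (validSeq_shots f a).chip_balance v T, fireList_shots]
  have hcross : ∀ {x y : L} {u : V}, Firable E (f x).1 u → (f y).1 = fire E (f x).1 u →
      MsetDiff x y = {m} → u = v ∧ (shots f x).count v = k := fun {x y u} hu hy hxy => by
    have h := firable_of_mem_MsetDiff hU f hf hu hy (m := m) (hxy ▸ rfl)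
    obtain rfl : u = v := (hm.existsUnique_firable hU f hf).unique h.1 (hν m hm)
    exact ⟨rfl, h.2⟩
  refine ⟨(outDeg E v - O v + k * (T + outDeg E v - E v v) : ℤ).toNat +
    (if Uset m = {⊥} then 1 else 0), fun x => if ν x = v then T else E (ν x) v,
    fun h => by simp [h], fun h => ?_⟩
  rw [if_neg h, add_zero]
  refine ⟨fun a ha => ?_, fun a ha => ?_⟩
  · have ham : a ≤ m := by
      by_contra hcon
      obtain ⟨u, hu, hua⟩ := hL.exists_mem_Uset_le_of_not_le hm a hcon
      exact not_le_of_mem_Lset ha hu hua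
    rw [Int.lt_toNat]
    have h1 := hbal a
    have h2 := hT a
    rcases (count_shots_mono hU f hf v ham).eq_or_lt with heq | hlt
    · have hnot : ¬ outDeg E v ≤ (f a).1 v := fun hle => by
        obtain ⟨b, hab, hb, hp⟩ := Firable.exists_covBy hU f hf ⟨(hν m hm).1, hle⟩
        have hbm : ¬ b ≤ m := fun hbm => by
          have := count_shots_mono hU f hf v hbm
          rw [hp.count_eq, List.count_append, heq] at this
          simp [hv] at this
        obtain ⟨m', hm'⟩ := hL.exists_MsetDiff_eq hab
        have hmem : m ∈ MsetDiff a b := ⟨hm, ham, hbm⟩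
        rw [hm'] at hmem
        obtain rfl : m = m' := hmem
        obtain ⟨u, hu, hua⟩ := exists_mem_Uset_le hab hm'
        exact not_le_of_mem_Lset ha hu hua
      rw [heq] at h1
      change ((f a).1 v : ℤ) + (k : ℤ) * _ = _ at h1
      have : ((f a).1 v : ℤ) < outDeg E v := by exact_mod_cast not_le.1 hnot
      linarith
    · have h3 : ((shots f a).count v : ℤ) + 1 ≤ k := by exact_mod_cast hlt
      have h4 : (0 : ℤ) ≤ T + outDeg E v - E v v := by omega
      have h5 := mul_le_mul_of_nonneg_right h3 h4
      have h6 : ((f a).1 v : ℤ) < T := by exact_mod_cast h2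
      have h7 : (0 : ℤ) ≤ outDeg E v := by positivity
      linarith
  · obtain ⟨y, hay, hmy⟩ := exists_covBy_of_mem_Uset ha
    obtain ⟨u, hu, hyu, -⟩ := CovBy.exists_firable hU f hf hay
    obtain ⟨huv, hcount⟩ := hcross hu hyu hmy
    rw [Int.toNat_le]
    have h1 := hbal a
    rw [hcount] at h1
    have h2 : (outDeg E v : ℤ) ≤ (f a).1 v := by exact_mod_cast huv ▸ hu.2
    linarith

end Necessity

section Sufficiency

variable {ι : Type} [DecidableEq ι] {L : Type*} [Lattice L] [Fintype L]

lemma finsum_MnotAbove_mono (e : L → ℕ) {a b : L} (h : a ≤ b) :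
    ∑ᶠ x ∈ MnotAbove a, e x ≤ ∑ᶠ x ∈ MnotAbove b, e x := by
  rw [finsum_mem_eq_toFinset_sum, finsum_mem_eq_toFinset_sum]
  exact Finset.sum_le_sum_of_subset (Set.toFinset_mono (le_iff_MnotAbove_subset.1 h))

variable [BoundedOrder L]

/-- The multigraph on `ι` and a sink `none` with `e` edges inside `ι` and `N` edges to the sink. -/
def sinkGraph (e : ι → ι → ℕ) (N : ℕ) : Option ι → Option ι → ℕ
  | none, _ => 0
  | some _, none => N
  | some j, some i => if j = i then 0 else e j i

lemma isSink_none (e : ι → ι → ℕ) (N : ℕ) : IsSink (sinkGraph e N) none := by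
  simp [IsSink, outDeg, sinkGraph]

variable [Fintype ι]

lemma outDeg_some (e : ι → ι → ℕ) (N : ℕ) (j : ι) :
    outDeg (sinkGraph e N) (some j) = N + ∑ i, if j = i then 0 else e j i := by
  rw [outDeg, finsum_eq_sum_of_fintype, Fintype.sum_option]
  rfl

/-- The configuration in which `some i` is `w i` chips short of firing. -/
noncomputable def shortConfig (e : ι → ι → ℕ) (N : ℕ) (w : ι → ℕ) : Option ι → ℕ
  | none => 0
  | some i => outDeg (sinkGraph e N) (some i) - w i

/-- The configuration obtained from `shortConfig` after each vertex of `S` has fired once. -/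
noncomputable def firedConfig (e : ι → ι → ℕ) (N : ℕ) (w : ι → ℕ) (S : Finset ι)
    (u : Option ι) : ℕ :=
  shortConfig e N w u + ∑ j ∈ S, sinkGraph e N (some j) u -
    if u ∈ S.map Function.Embedding.some then outDeg (sinkGraph e N) u else 0

/-- A chip firing game in which every vertex fires at most once, realizing a lattice of sets. -/
theorem memLCFG_of_sets (S : L → Finset ι) (w : ι → ℕ) (e : ι → ι → ℕ)
    (hle : ∀ a b, a ≤ b ↔ S a ⊆ S b) (hbot : S ⊥ = ∅)
    (hcov : ∀ a b, a ⋖ b → ∃ i, i ∉ S a ∧ S b = insert i (S a))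
    (hfire : ∀ a i, i ∉ S a →
      (w i ≤ ∑ j ∈ S a, e j i ↔ ∃ b, S b = insert i (S a))) : MemLCFG L := by
  set N := 1 + ∑ i, (w i + ∑ j, e j i) with hN
  set G := sinkGraph e N with hG
  set C := fun a => firedConfig e N w (S a) with hC
  let R : L → ι → ℕ := fun a i => ∑ j ∈ S a, G (some j) (some i)
  have hRN : ∀ a i, w i + R a i < N := fun a i => by
    have h1 : R a i ≤ ∑ j, e j i :=
      (Finset.sum_le_sum fun j _ => by
        change (if j = i then 0 else e j i) ≤ e j i; split_ifs <;> simp).trans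
        (Finset.sum_le_sum_of_subset (Finset.subset_univ (S a)))
    have h2 := Finset.single_le_sum (f := fun i => w i + ∑ j, e j i)
      (fun _ _ => Nat.zero_le _) (Finset.mem_univ i)
    omega
  have hND : ∀ i, N ≤ outDeg G (some i) := fun i => by
    rw [hG, outDeg_some]; exact Nat.le_add_right _ _
  have hR : ∀ a i, i ∉ S a → R a i = ∑ j ∈ S a, e j i := fun a i hi =>
    Finset.sum_congr rfl fun j hj => if_neg (by rintro rfl; exact hi hj)
  have hRmono : ∀ {a b}, a ≤ b → ∀ i, R a i ≤ R b i := fun {a b} hab i =>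
    Finset.sum_le_sum_of_subset ((hle a b).1 hab)
  have hRw : ∀ a i, i ∈ S a → w i ≤ R a i := by
    intro a
    induction a using WellFoundedLT.induction with
    | ind a ih =>
      intro i hi
      have ha : a ≠ ⊥ := by rintro rfl; simp [hbot] at hi
      obtain ⟨b, -, hb⟩ := exists_le_covBy_of_lt (bot_lt_iff_ne_bot.2 ha)
      refine le_trans ?_ (hRmono hb.le i)
      by_cases hib : i ∈ S b
      · exact ih b hb.lt i hib
      · obtain ⟨j, hj, hins⟩ := hcov b a hb
        obtain rfl : i = j := by
          rw [hins, Finset.mem_insert] at hi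
          exact hi.resolve_right hib
        rw [hR b i hib]
        exact (hfire b i hib).2 ⟨a, hins⟩
  have hCin : ∀ a i, i ∈ S a → C a (some i) + w i = R a i := fun a i hi => by
    have h1 := hRw a i hi
    have h2 := hRN a i
    have h3 := hND i
    have h4 : C a (some i) = outDeg G (some i) - w i + R a i - outDeg G (some i) := by
      simp [hC, firedConfig, hi, shortConfig, R, hG]
    omega
  have hCout : ∀ a i, i ∉ S a → C a (some i) + w i = outDeg G (some i) + R a i := fun a i hi => by
    have h2 := hRN a i
    have h3 := hND i
    have h4 : C a (some i) = outDeg G (some i) - w i + R a i := by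
      simp [hC, firedConfig, hi, shortConfig, R, hG]
    omega
  have hCnone : ∀ a, C a none = (S a).card * N := fun a => by
    simp [hC, firedConfig, shortConfig, sinkGraph]
  have hsink : ∀ i, ¬ IsSink G (some i) := fun i h => by
    have h1 : outDeg G (some i) = 0 := h.trans (if_pos rfl)
    have := hND i
    omega
  have hfirable : ∀ a u, Firable G (C a) u ↔
      ∃ i, u = some i ∧ i ∉ S a ∧ w i ≤ ∑ j ∈ S a, e j i := by
    intro a u
    constructor
    · rintro ⟨hs, hd⟩
      cases u with
      | none => exact absurd (isSink_none e N) hs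
      | some i =>
        have h2 := hRN a i
        have h3 := hND i
        have hi : i ∉ S a := fun hi => by
          have h1 := hCin a i hi
          omega
        refine ⟨i, rfl, hi, ?_⟩
        have h1 := hCout a i hi
        rw [← hR a i hi]
        omega
    · rintro ⟨i, rfl, hi, hw⟩
      rw [← hR a i hi] at hw
      have h1 := hCout a i hi
      exact ⟨hsink i, by omega⟩
  have hstep : ∀ a b i, i ∉ S a → S b = insert i (S a) → fire G (C a) (some i) = C b := by
    intro a b i hi hb
    have hRb : ∀ k, R b k = G (some i) (some k) + R a k := fun k => by
      simp only [R, hb, Finset.sum_insert hi]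
    funext u
    cases u with
    | none =>
      simp only [fire, hCnone, hb, Finset.card_insert_of_notMem hi, reduceCtorEq, if_false]
      change _ + N = _
      ring
    | some k =>
      have hk := hRb k
      rcases eq_or_ne k i with rfl | hne
      · have h1 := hCin b k (hb ▸ Finset.mem_insert_self _ _)
        have h2 := hCout a k hi
        have h3 : G (some k) (some k) = 0 := if_pos rfl
        simp only [fire, if_true, h3]
        have h4 := hRw b k (hb ▸ Finset.mem_insert_self _ _)
        omega
      · simp only [fire, Option.some.injEq, if_neg hne]
        by_cases hka : k ∈ S a
        · have h1 := hCin b k (hb ▸ Finset.mem_insert_of_mem hka)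
          have h2 := hCin a k hka
          omega
        · have h1 := hCout b k (by simp [hb, hne, hka])
          have h2 := hCout a k hka
          omega
  have hsub : ∀ {a b}, C a = C b → S a ⊆ S b := fun {a b} h i hi => by
    by_contra hib
    have h1 := hCin a i hi
    have h2 := hCout b i hib
    have h3 := hND i
    have h4 := hRN a i
    rw [h] at h1
    omega
  have hinj : Function.Injective C := fun a b h =>
    le_antisymm ((hle _ _).2 (hsub h)) ((hle _ _).2 (hsub h.symm))
  have hreach : ∀ a b, a ≤ b → Reaches G (C a) (C b) := by
    intro a b
    induction a using WellFoundedGT.induction with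
    | ind a ih =>
      intro hab
      rcases hab.eq_or_lt with rfl | hlt
      · exact ⟨[], trivial, rfl⟩
      · obtain ⟨c, hac, hcb⟩ := exists_covBy_le_of_lt hlt
        obtain ⟨i, hi, hins⟩ := hcov a c hac
        obtain ⟨l, hl, hlb⟩ := ih c hac.lt hcb
        rw [← hstep a c i hi hins] at hl hlb
        exact ⟨some i :: l,
          ⟨(hfirable a _).2 ⟨i, rfl, hi, (hfire a i hi).2 ⟨c, hins⟩⟩, hl⟩, hlb⟩
  have hreach' : ∀ (l : List (Option ι)) a, ValidSeq G (C a) l →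
      ∃ b, a ≤ b ∧ fireList G (C a) l = C b := by
    intro l
    induction l with
    | nil => exact fun a _ => ⟨a, le_rfl, rfl⟩
    | cons u l ih =>
      rintro a ⟨hu, hl⟩
      obtain ⟨i, rfl, hi, hw⟩ := (hfirable a u).1 hu
      obtain ⟨c, hc⟩ := (hfire a i hi).1 hw
      rw [hstep a c i hi hc] at hl
      obtain ⟨b, hcb, hb⟩ := ih c hl
      refine ⟨b, ((hle a c).2 (hc ▸ Finset.subset_insert _ _)).trans hcb, ?_⟩
      rw [← hb, ← hstep a c i hi hc]
      rfl
  have hiff : ∀ a b, a ≤ b ↔ Reaches G (C a) (C b) := fun a b => by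
    refine ⟨hreach a b, ?_⟩
    rintro ⟨l, hl, hlb⟩
    obtain ⟨c, hac, hc⟩ := hreach' l a hl
    rwa [← hinj (hc.symm.trans hlb)]
  have hex : ∀ c, Reaches G (C ⊥) c → ∃ a, C a = c := by
    rintro c ⟨l, hl, hlc⟩
    obtain ⟨b, -, hb⟩ := hreach' l ⊥ hl
    exact ⟨b, hb.symm.trans hlc⟩
  refine ⟨Option ι, inferInstance, G, C ⊥, ⟨C ⊤, hreach _ _ bot_le, ?_, ?_⟩,
    Equiv.ofBijective (fun a => ⟨C a, hreach _ _ bot_le⟩) ⟨?_, ?_⟩, hiff⟩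
  · intro u hu
    obtain ⟨i, rfl, hi, hw⟩ := (hfirable ⊤ u).1 hu
    obtain ⟨c, hc⟩ := (hfire ⊤ i hi).1 hw
    exact hi ((hle c ⊤).1 le_top (hc ▸ Finset.mem_insert_self _ _))
  · intro c hc
    obtain ⟨a, rfl⟩ := hex c hc
    exact hreach _ _ le_top
  · exact fun a b h => hinj (congrArg Subtype.val h)
  · rintro ⟨c, hc⟩
    obtain ⟨a, rfl⟩ := hex c hc
    exact ⟨a, rfl⟩

/-- A solution of `E(m)` describes exactly the elements at which `m` can be crossed. -/
lemma exists_weights_of_hasSolE {m : L} (hm : MeetIrred m) (h : HasSolE m) :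
    ∃ (w : ℕ) (e : L → ℕ), ∀ a, a ≤ m →
      (w ≤ ∑ᶠ x ∈ MnotAbove a, e x ↔ ∃ b, MnotAbove b = insert m (MnotAbove a)) := by
  have hup : ∀ {a : L}, (∃ u ∈ Uset m, u ≤ a) → ∃ b, MnotAbove b = insert m (MnotAbove a) := by
    rintro a ⟨u, hu, hua⟩
    obtain ⟨y, huy, hy⟩ := exists_covBy_of_mem_Uset hu
    exact exists_MnotAbove_eq_insert huy hy hua
  obtain ⟨w, e, -, hsol⟩ := h
  by_cases hbot : Uset m = {⊥}
  · exact ⟨0, 0, fun a _ => ⟨fun _ => hup ⟨⊥, hbot ▸ rfl, bot_le⟩, fun _ => Nat.zero_le _⟩⟩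
  obtain ⟨hlow, hhigh⟩ := hsol hbot
  refine ⟨w, e, fun a ham => ⟨fun hw => hup ?_, ?_⟩⟩
  · by_contra! hcon
    obtain ⟨l, hl, hal⟩ := exists_mem_Lset_le hcon
    exact (hw.trans (finsum_MnotAbove_mono e hal)).not_gt (hlow l hl)
  · rintro ⟨b, hb⟩
    have hab := covBy_of_MnotAbove_eq_insert ham hb
    obtain ⟨u, hu, hua⟩ :=
      exists_mem_Uset_le hab ((MnotAbove_eq_insert_iff hab.le).2 ⟨hm, ham, hb⟩)
    exact (hhigh u hu).trans (finsum_MnotAbove_mono e hua)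

lemma IsULD.memLCFG_of_hasSolE (hL : IsULD L) (h : ∀ m : L, MeetIrred m → HasSolE m) :
    MemLCFG L := by
  obtain ⟨n, σ, hσ, hrange⟩ : ∃ (n : ℕ) (σ : Fin n → L), Function.Injective σ ∧
      ∀ m, MeetIrred m ↔ ∃ i, σ i = m :=
    ⟨_, fun i => ((Fintype.equivFin {m : L // MeetIrred m}).symm i).1,
      Subtype.val_injective.comp (Equiv.injective _), fun m =>
      ⟨fun hm => ⟨Fintype.equivFin _ ⟨m, hm⟩, by simp⟩, by rintro ⟨i, rfl⟩; exact Subtype.prop _⟩⟩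
  have hirr : ∀ i, MeetIrred (σ i) := fun i => (hrange _).2 ⟨i, rfl⟩
  choose w e hwe using fun i => exists_weights_of_hasSolE (hirr i) (h _ (hirr i))
  set S : L → Finset (Fin n) := fun a => Finset.univ.filter fun i => ¬ a ≤ σ i with hSdef
  have hS : ∀ a, MnotAbove a = σ '' S a := fun a => by
    ext m
    simp only [MnotAbove, Set.mem_ofPred_eq, hrange, hSdef, Finset.coe_filter, Finset.mem_univ,
      true_and, Set.mem_image]
    constructor
    · rintro ⟨⟨i, rfl⟩, hi⟩
      exact ⟨i, hi, rfl⟩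
    · rintro ⟨i, hi, rfl⟩
      exact ⟨⟨i, rfl⟩, hi⟩
  have hins : ∀ a b i, MnotAbove b = insert (σ i) (MnotAbove a) ↔ S b = insert i (S a) :=
    fun a b i => by
      rw [hS, hS, ← Set.image_insert_eq, hσ.image_injective.eq_iff, ← Finset.coe_insert,
        Finset.coe_inj]
  refine memLCFG_of_sets S w (fun j i => e i (σ j)) ?_ ?_ ?_ ?_
  · intro a b
    rw [le_iff_MnotAbove_subset, hS, hS, Set.image_subset_image_iff hσ, Finset.coe_subset]
  · simp [hSdef]
  · intro a b hab
    obtain ⟨m, hm⟩ := hL.exists_MsetDiff_eq hab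
    obtain ⟨hmi, ham, hb⟩ := (MnotAbove_eq_insert_iff hab.le).1 hm
    obtain ⟨i, rfl⟩ := (hrange m).1 hmi
    exact ⟨i, by simpa [hSdef] using ham, (hins a b i).1 hb⟩
  · intro a i hi
    have := hwe i a (by simpa [hSdef] using hi)
    simp only [hins] at this
    rwa [hS, finsum_mem_image hσ.injOn, finsum_mem_coe_finset] at this

end Sufficiency

/-- a finite ULD lattice `L` is in `L(CFG)` if and only if for every
meet-irreducible `m` of `L` the system `E(m)` has a non-negative integer solution. -/
theorem stmt4 {L : Type*} [Lattice L] [Fintype L] [BoundedOrder L]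
    (hULD : IsULD L) :
    MemLCFG L ↔ ∀ m : L, MeetIrred m → HasSolE m :=
  ⟨fun h _ hm => hULD.hasSolE_of_memLCFG h hm, hULD.memLCFG_of_hasSolE⟩
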